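/- arXiv:2602.23311 — 2 statements merged into one kernel-verified Lean document; each statement's English description precedes it below -/
import Mathlib

section
/- For every unconstrained coefficient vector β ∈ ℝ^D, the transformation H equals the identity outside the compact set [a, b]; that is, H(x) = x for all x ∈ (−∞, a] ∪ [b, ∞). -/
open MeasureTheory Finset

noncomputable section

/-- The cardinal cubic B-spline. -/
def cubicN (t : ℝ) : ℝ :=
  if 0 ≤ t ∧ t < 1 then t ^ 3 / 6
  else if 1 ≤ t ∧ t < 2 then (-3 * t ^ 3 + 12 * t ^ 2 - 12 * t + 4) / 6
  else if 2 ≤ t ∧ t < 3 then (3 * t ^ 3 - 24 * t ^ 2 + 60 * t - 44) / 6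
  else if 3 ≤ t ∧ t ≤ 4 then (4 - t) ^ 3 / 6
  else 0

/-- Equidistant knots `k_j = k0 + j·k`. -/
def knot (k0 k : ℝ) (j : ℤ) : ℝ := k0 + (j : ℝ) * k

/-- Cubic B-spline basis functions `B_j(x) = N((x − k_{j−3})/k)` for `j = 1, …, J`. -/
def Bspl (k0 k : ℝ) (j : ℕ) (x : ℝ) : ℝ := cubicN ((x - knot k0 k ((j : ℤ) - 3)) / k)

/-- The coefficients `γ_1, …, γ_J` (with `J = D + 7`, `m = D + 5`), defined from the
unconstrained vector `β ∈ ℝ^D`. -/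
def gam (D : ℕ) (k0 k : ℝ) (β : Fin D → ℝ) (j : ℕ) : ℝ :=
  if j = 1 then k0
  else if j = 2 ∨ j = 3 ∨ j = 4 ∨ j = D + 5 ∨ j = D + 6 ∨ j = D + 7 then Real.log k
  else if h : 5 ≤ j ∧ j ≤ D + 4 then
    β ⟨j - 5, by omega⟩ - Real.log ((∑ d, Real.exp (β d)) / ((D : ℝ) * k))
  else 0

/-- The transformation `H`: a cubic B-spline with coefficients
`γ_1 + ∑_{ℓ=2}^j exp(γ_ℓ)` on `[k_1, k_m]` (with `m = D + 5`), and the identity outside. -/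
def Hfun (D : ℕ) (k0 k : ℝ) (β : Fin D → ℝ) (x : ℝ) : ℝ :=
  if knot k0 k 1 ≤ x ∧ x ≤ knot k0 k ((D : ℤ) + 5) then
    ∑ j ∈ Finset.Icc 1 (D + 7),
      Bspl k0 k j x * (gam D k0 k β 1 + ∑ l ∈ Finset.Icc 2 j, Real.exp (gam D k0 k β l))
  else x


theorem cubicN_zero (t : ℝ) (h : t ≤ 0 ∨ 4 ≤ t) : cubicN t = 0 := by
  unfold cubicN
  rcases h with h | h
  · split_ifs with h1 h2 h3 h4
    · have : t = 0 := le_antisymm h h1.1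
      subst this; norm_num
    all_goals first | rfl | (exfalso; linarith [h2.1]) | (exfalso; linarith [h3.1]) | (exfalso; linarith [h4.1])
  · split_ifs with h1 h2 h3 h4
    · exfalso; linarith [h1.2]
    · exfalso; linarith [h2.2]
    · exfalso; linarith [h3.2]
    · have : t = 4 := le_antisymm h4.2 h
      subst this; norm_num
    · rfl

theorem cubicN_p0 (u : ℝ) (h0 : 0 ≤ u) (h1 : u ≤ 1) : cubicN u = u ^ 3 / 6 := by
  rcases h1.lt_or_eq with h | rfl
  · unfold cubicN; rw [if_pos ⟨h0, h⟩]
  · unfold cubicN; norm_num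

theorem cubicN_p1 (u : ℝ) (h0 : 0 ≤ u) (h1 : u ≤ 1) :
    cubicN (u + 1) = (-3 * (u + 1) ^ 3 + 12 * (u + 1) ^ 2 - 12 * (u + 1) + 4) / 6 := by
  rcases h1.lt_or_eq with h | rfl
  · unfold cubicN
    rw [if_neg (fun h => by linarith [h.2]), if_pos ⟨by linarith, by linarith⟩]
  · unfold cubicN; norm_num

theorem cubicN_p2 (u : ℝ) (h0 : 0 ≤ u) (h1 : u ≤ 1) :
    cubicN (u + 2) = (3 * (u + 2) ^ 3 - 24 * (u + 2) ^ 2 + 60 * (u + 2) - 44) / 6 := by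
  rcases h1.lt_or_eq with h | rfl
  · unfold cubicN
    rw [if_neg (fun h => by linarith [h.2]), if_neg (fun h => by linarith [h.2]),
      if_pos ⟨by linarith, by linarith⟩]
  · unfold cubicN; norm_num

theorem cubicN_p3 (u : ℝ) (h0 : 0 ≤ u) (h1 : u ≤ 1) :
    cubicN (u + 3) = (4 - (u + 3)) ^ 3 / 6 := by
  unfold cubicN
  rw [if_neg (fun h => by linarith [h.2]), if_neg (fun h => by linarith [h.2]),
    if_neg (fun h => by linarith [h.2]), if_pos ⟨by linarith, by linarith⟩]

theorem seg_sum (k0 k u : ℝ) (h0 : 0 ≤ u) (h1 : u ≤ 1) (n M : ℕ) (hn : 1 ≤ n) (hM : n + 3 ≤ M)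
    (c : ℕ → ℝ) (hc : ∀ i : ℕ, i ≤ 3 → c (n + i) = k0 + ((n : ℝ) + i - 1) * k) :
    ∑ j ∈ Finset.Icc 1 M, cubicN ((n : ℝ) + 3 + u - j) * c j = k0 + (n + u) * k := by
  rw [← Finset.sum_subset (s₁ := Finset.Ico n (n + 4))]
  · rw [Finset.sum_Ico_eq_sum_range, show n + 4 - n = 4 by omega]
    simp only [Finset.sum_range_succ, Finset.sum_range_zero]
    rw [hc 0 (by norm_num), hc 1 (by norm_num), hc 2 (by norm_num), hc 3 (by norm_num)]
    push_cast
    rw [show (n : ℝ) + 3 + u - (n + 0) = u + 3 by ring,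
      show (n : ℝ) + 3 + u - (n + 1) = u + 2 by ring,
      show (n : ℝ) + 3 + u - (n + 2) = u + 1 by ring,
      show (n : ℝ) + 3 + u - (n + 3) = u by ring,
      cubicN_p0 u h0 h1, cubicN_p1 u h0 h1, cubicN_p2 u h0 h1, cubicN_p3 u h0 h1]
    ring
  · intro j hj
    simp only [Finset.mem_Ico, Finset.mem_Icc] at *
    omega
  · intro j _ hj2
    simp only [Finset.mem_Ico] at hj2
    rw [cubicN_zero, zero_mul]
    rcases Nat.lt_or_ge j n with h | h
    · right
      have : (j : ℝ) + 1 ≤ n := by exact_mod_cast h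
      linarith
    · left
      have : (n : ℝ) + 4 ≤ j := by
        have : n + 4 ≤ j := by omega
        exact_mod_cast this
      linarith

theorem exp_gam_end (D : ℕ) (k0 k : ℝ) (hk : 0 < k) (β : Fin D → ℝ) (j : ℕ)
    (hj : j = 2 ∨ j = 3 ∨ j = 4 ∨ j = D + 5 ∨ j = D + 6 ∨ j = D + 7) :
    Real.exp (gam D k0 k β j) = k := by
  unfold gam
  rw [if_neg (by omega), if_pos hj, Real.exp_log hk]

theorem sum_mid (D : ℕ) (hD : 1 ≤ D) (k0 k : ℝ) (hk : 0 < k) (β : Fin D → ℝ) :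
    ∑ l ∈ Finset.Ico 5 (D + 5), Real.exp (gam D k0 k β l) = D * k := by
  rw [Finset.sum_Ico_eq_sum_range, show D + 5 - 5 = D by omega, Finset.sum_range]
  have hDp : (0 : ℝ) < D := by exact_mod_cast hD
  have : Nonempty (Fin D) := ⟨⟨0, hD⟩⟩
  have hS : 0 < ∑ d, Real.exp (β d) :=
    Finset.sum_pos (fun i _ => Real.exp_pos _) Finset.univ_nonempty
  have : ∀ i : Fin D, Real.exp (gam D k0 k β (5 + i)) =
      Real.exp (β i) / ((∑ d, Real.exp (β d)) / ((D : ℝ) * k)) := by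
    intro i
    have hi := i.2
    unfold gam
    rw [if_neg (by omega), if_neg (by omega), dif_pos (by omega), Real.exp_sub,
      Real.exp_log (by positivity)]
    congr 3
    apply Fin.ext
    simp
  rw [Finset.sum_congr rfl (fun i _ => this i), ← Finset.sum_div]
  field_simp

theorem H_seg (D : ℕ) (k0 k : ℝ) (hk : 0 < k) (β : Fin D → ℝ) (x : ℝ) (n : ℕ) (hn : 1 ≤ n)
    (hM : n + 3 ≤ D + 7) (h0 : k0 + n * k ≤ x) (h1 : x ≤ k0 + (n + 1) * k)
    (hc : ∀ i : ℕ, i ≤ 3 → ∑ l ∈ Finset.Ico 2 (n + i + 1), Real.exp (gam D k0 k β l) =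
      ((n : ℝ) + i - 1) * k) :
    ∑ j ∈ Finset.Icc 1 (D + 7),
      Bspl k0 k j x * (gam D k0 k β 1 + ∑ l ∈ Finset.Icc 2 j, Real.exp (gam D k0 k β l)) = x := by
  have key := seg_sum k0 k ((x - k0) / k - n)
    (by rw [sub_nonneg, le_div_iff₀ hk]; linarith)
    (by rw [sub_le_iff_le_add, div_le_iff₀ hk]; linarith) n (D + 7) hn hM
    (fun j => gam D k0 k β 1 + ∑ l ∈ Finset.Icc 2 j, Real.exp (gam D k0 k β l))
    (by
      intro i hi
      have := hc i hi
      have e : Finset.Icc 2 (n + i) = Finset.Ico 2 (n + i + 1) := by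
        ext a; simp only [Finset.mem_Icc, Finset.mem_Ico]; omega
      simp only [e, this]
      simp [gam])
  have e2 : k0 + ((n : ℝ) + ((x - k0) / k - n)) * k = x := by field_simp; ring
  rw [e2] at key
  refine Eq.trans (Finset.sum_congr rfl fun j _ => ?_) key
  congr 1
  unfold Bspl knot
  congr 1
  push_cast
  field_simp
  ring

/-- For every `β ∈ ℝ^D`, the transformation `H` equals the identity outside
the compact set `[a, b]`: `H(x) = x` for all `x ∈ (−∞, a] ∪ [b, ∞)`, where `a = k_2` and
`b = k_{m−1}` with `m = D + 5`. -/
theorem H_identity_outside (D : ℕ) (hD : 1 ≤ D) (k0 k : ℝ) (hk : 0 < k)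
    (β : Fin D → ℝ) (x : ℝ)
    (hx : x ≤ knot k0 k 2 ∨ knot k0 k ((D : ℤ) + 4) ≤ x) :
    Hfun D k0 k β x = x := by
  unfold Hfun
  split_ifs with h
  · obtain ⟨ha, hb⟩ := h
    unfold knot at *
    push_cast at *
    rcases hx with hx | hx
    · apply H_seg D k0 k hk β x 1 le_rfl (by omega) (by push_cast; linarith) (by push_cast; linarith)
      intro i hi
      have : ∀ l ∈ Finset.Ico 2 (1 + i + 1), Real.exp (gam D k0 k β l) = k := by
        intro l hl
        simp only [Finset.mem_Ico] at hl
        exact exp_gam_end D k0 k hk β l (by omega)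
      rw [Finset.sum_congr rfl this, Finset.sum_const, Nat.card_Ico,
        show 1 + i + 1 - 2 = i by omega]
      simp
    · apply H_seg D k0 k hk β x (D + 4) (by omega) (by omega) (by push_cast; linarith)
        (by push_cast; linarith)
      intro i hi
      rw [← Finset.sum_Ico_consecutive _ (show 2 ≤ 5 by norm_num)
          (show 5 ≤ D + 4 + i + 1 by omega),
        ← Finset.sum_Ico_consecutive _ (show 5 ≤ D + 5 by omega)
          (show D + 5 ≤ D + 4 + i + 1 by omega), sum_mid D hD k0 k hk β]
      have t1 : ∀ l ∈ Finset.Ico 2 5, Real.exp (gam D k0 k β l) = k := by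
        intro l hl
        simp only [Finset.mem_Ico] at hl
        exact exp_gam_end D k0 k hk β l (by omega)
      have t2 : ∀ l ∈ Finset.Ico (D + 5) (D + 4 + i + 1), Real.exp (gam D k0 k β l) = k := by
        intro l hl
        simp only [Finset.mem_Ico] at hl
        exact exp_gam_end D k0 k hk β l (by omega)
      rw [Finset.sum_congr rfl t1, Finset.sum_congr rfl t2, Finset.sum_const, Finset.sum_const,
        Nat.card_Ico, Nat.card_Ico, show D + 4 + i + 1 - (D + 5) = i by omega]
      simp only [nsmul_eq_mul]
      push_cast
      ring
  · rfl


end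
end

section
/- For every unconstrained coefficient vector β ∈ ℝ^D and every segment index j with 1 ≤ j ≤ m − 1, the increment of H over the knot segment [k_j, k_{j+1}] has the closed form H(k_{j+1}) − H(k_j) = (1/6)·exp(γ_{j+1}) + (2/3)·exp(γ_{j+2}) + (1/6)·exp(γ_{j+3}); equivalently, the average derivative of H over [k_j, k_{j+1}] equals (1/k)·((1/6)·exp(γ_{j+1}) + (2/3)·exp(γ_{j+2}) + (1/6)·exp(γ_{j+3})). -/
open MeasureTheory Finset

noncomputable section

lemma cN0 (t : ℝ) (h0 : 0 ≤ t) (h1 : t ≤ 1) : cubicN t = t ^ 3 / 6 := by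
  unfold cubicN
  rcases h1.lt_or_eq with h | h
  · rw [if_pos ⟨h0, h⟩]
  · subst h; norm_num

lemma cN1 (t : ℝ) (h0 : 0 ≤ t) (h1 : t ≤ 1) : cubicN (t + 1) =
    (-3 * (t + 1) ^ 3 + 12 * (t + 1) ^ 2 - 12 * (t + 1) + 4) / 6 := by
  unfold cubicN
  rcases h1.lt_or_eq with h | h
  · rw [if_neg (by rintro ⟨_, _⟩; linarith), if_pos ⟨by linarith, by linarith⟩]
  · subst h; norm_num

lemma cN2 (t : ℝ) (h0 : 0 ≤ t) (h1 : t ≤ 1) : cubicN (t + 2) =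
    (3 * (t + 2) ^ 3 - 24 * (t + 2) ^ 2 + 60 * (t + 2) - 44) / 6 := by
  unfold cubicN
  rcases h1.lt_or_eq with h | h
  · rw [if_neg (by rintro ⟨_, _⟩; linarith), if_neg (by rintro ⟨_, _⟩; linarith),
      if_pos ⟨by linarith, by linarith⟩]
  · subst h; norm_num

lemma cN3 (t : ℝ) (h0 : 0 ≤ t) (h1 : t ≤ 1) : cubicN (t + 3) = (1 - t) ^ 3 / 6 := by
  unfold cubicN
  rw [if_neg (by rintro ⟨_, _⟩; linarith), if_neg (by rintro ⟨_, _⟩; linarith),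
      if_neg (by rintro ⟨_, _⟩; linarith), if_pos ⟨by linarith, by linarith⟩]
  ring

lemma cN_neg (t : ℝ) (h0 : t ≤ 0) : cubicN t = 0 := by
  rcases h0.lt_or_eq with h | h
  · unfold cubicN
    rw [if_neg (by rintro ⟨_, _⟩; linarith), if_neg (by rintro ⟨_, _⟩; linarith),
      if_neg (by rintro ⟨_, _⟩; linarith), if_neg (by rintro ⟨_, _⟩; linarith)]
  · subst h; rw [cN0 0 le_rfl zero_le_one]; norm_num

lemma cN_big (t : ℝ) (h0 : 4 ≤ t) : cubicN t = 0 := by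
  rcases h0.lt_or_eq with h | h
  · unfold cubicN
    rw [if_neg (by rintro ⟨_, _⟩; linarith), if_neg (by rintro ⟨_, _⟩; linarith),
      if_neg (by rintro ⟨_, _⟩; linarith), if_neg (by rintro ⟨_, _⟩; linarith)]
  · subst h; have := cN3 1 zero_le_one le_rfl; norm_num at this; exact this

def segP (c0 c1 c2 c3 t : ℝ) : ℝ :=
  (1 - t) ^ 3 / 6 * c0
  + (3 * (t + 2) ^ 3 - 24 * (t + 2) ^ 2 + 60 * (t + 2) - 44) / 6 * c1
  + (-3 * (t + 1) ^ 3 + 12 * (t + 1) ^ 2 - 12 * (t + 1) + 4) / 6 * c2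
  + t ^ 3 / 6 * c3

def cf (D : ℕ) (k0 k : ℝ) (β : Fin D → ℝ) (j : ℕ) : ℝ :=
  gam D k0 k β 1 + ∑ l ∈ Finset.Icc 2 j, Real.exp (gam D k0 k β l)

lemma cf_succ (D : ℕ) (k0 k : ℝ) (β : Fin D → ℝ) (j : ℕ) (hj : 1 ≤ j) :
    cf D k0 k β (j + 1) = cf D k0 k β j + Real.exp (gam D k0 k β (j + 1)) := by
  unfold cf
  rw [Finset.sum_Icc_succ_top (by omega)]
  ring

lemma H_eq (D : ℕ) (k0 k : ℝ) (hk : 0 < k)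
    (β : Fin D → ℝ) (j : ℕ) (hj1 : 1 ≤ j) (hj2 : j ≤ D + 4) (t : ℝ) (h0 : 0 ≤ t) (h1 : t ≤ 1) :
    Hfun D k0 k β (k0 + (j + t) * k) = segP (cf D k0 k β j) (cf D k0 k β (j + 1))
      (cf D k0 k β (j + 2)) (cf D k0 k β (j + 3)) t := by
  have hj1' : (1 : ℝ) ≤ j := by exact_mod_cast hj1
  have hj2' : (j : ℝ) ≤ D + 4 := by exact_mod_cast hj2
  have hB : ∀ i : ℕ, Bspl k0 k i (k0 + (j + t) * k) = cubicN (t + (j - i + 3)) := by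
    intro i
    unfold Bspl knot
    congr 1
    push_cast
    field_simp
    ring
  unfold Hfun
  rw [if_pos]
  · rw [← Finset.sum_subset (s₁ := Finset.Icc j (j + 3))]
    · rw [Finset.sum_Icc_succ_top (by omega), Finset.sum_Icc_succ_top (by omega),
        Finset.sum_Icc_succ_top (by omega), Finset.Icc_self, Finset.sum_singleton]
      simp only [hB]
      change _ * cf D k0 k β j + _ * cf D k0 k β (j + 1) + _ * cf D k0 k β (j + 2)
        + _ * cf D k0 k β (j + 3) = _
      unfold segP
      rw [← cN3 t h0 h1, ← cN2 t h0 h1, ← cN1 t h0 h1, ← cN0 t h0 h1]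
      push_cast
      congr <;> ring
    · intro i
      simp only [Finset.mem_Icc]
      omega
    · intro i hi hn
      simp only [Finset.mem_Icc] at hi hn
      rw [hB]
      have : i + 1 ≤ j ∨ j + 4 ≤ i := by omega
      rcases this with h | h
      · have h' : (i : ℝ) + 1 ≤ j := by exact_mod_cast h
        rw [cN_big _ (by linarith), zero_mul]
      · have h' : (j : ℝ) + 4 ≤ i := by exact_mod_cast h
        rw [cN_neg _ (by linarith), zero_mul]
  · unfold knot
    push_cast
    constructor
    · have : (1 : ℝ) * k ≤ (j + t) * k := mul_le_mul_of_nonneg_right (by linarith) hk.le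
      linarith
    · have : (j + t) * k ≤ ((D : ℝ) + 5) * k := mul_le_mul_of_nonneg_right (by linarith) hk.le
      linarith

/-- For every `β ∈ ℝ^D` and every segment index `j` with `1 ≤ j ≤ m − 1`
(`m = D + 5`), the increment of `H` over `[k_j, k_{j+1}]` has the closed form
`H(k_{j+1}) − H(k_j) = (1/6)·exp(γ_{j+1}) + (2/3)·exp(γ_{j+2}) + (1/6)·exp(γ_{j+3})`;
equivalently, the average derivative of `H` over `[k_j, k_{j+1}]` equals
`(1/k)·((1/6)·exp(γ_{j+1}) + (2/3)·exp(γ_{j+2}) + (1/6)·exp(γ_{j+3}))`. -/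
theorem H_segment_increment (D : ℕ) (hD : 1 ≤ D) (k0 k : ℝ) (hk : 0 < k)
    (β : Fin D → ℝ) (j : ℕ) (hj1 : 1 ≤ j) (hj2 : j ≤ D + 4) :
    (Hfun D k0 k β (knot k0 k ((j : ℤ) + 1)) - Hfun D k0 k β (knot k0 k (j : ℤ))
      = (1 / 6) * Real.exp (gam D k0 k β (j + 1))
        + (2 / 3) * Real.exp (gam D k0 k β (j + 2))
        + (1 / 6) * Real.exp (gam D k0 k β (j + 3))) ∧
    (1 / k) * ∫ x in (knot k0 k (j : ℤ))..(knot k0 k ((j : ℤ) + 1)),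
        deriv (Hfun D k0 k β) x
      = (1 / k) * ((1 / 6) * Real.exp (gam D k0 k β (j + 1))
        + (2 / 3) * Real.exp (gam D k0 k β (j + 2))
        + (1 / 6) * Real.exp (gam D k0 k β (j + 3))) := by
  set R := (1 / 6) * Real.exp (gam D k0 k β (j + 1))
        + (2 / 3) * Real.exp (gam D k0 k β (j + 2))
        + (1 / 6) * Real.exp (gam D k0 k β (j + 3)) with hR
  set P : ℝ → ℝ := segP (cf D k0 k β j) (cf D k0 k β (j + 1))
      (cf D k0 k β (j + 2)) (cf D k0 k β (j + 3)) with hP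
  have key := H_eq D k0 k hk β j hj1 hj2
  have hPR : P 1 - P 0 = R := by
    have e1 := cf_succ D k0 k β j hj1
    have e2 := cf_succ D k0 k β (j + 1) (by omega)
    have e3 := cf_succ D k0 k β (j + 2) (by omega)
    simp only [hP, segP, hR]
    norm_num only [add_assoc] at e1 e2 e3 ⊢
    linear_combination (1/6) * e1 + (2/3) * e2 + (1/6) * e3
  have ha : knot k0 k (j : ℤ) = k0 + (j + 0) * k := by simp [knot]
  have hb : knot k0 k ((j : ℤ) + 1) = k0 + (j + 1) * k := by simp [knot]
  refine ⟨?_, ?_⟩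
  · rw [ha, hb, key 0 le_rfl zero_le_one, key 1 zero_le_one le_rfl]
    exact hPR
  · congr 1
    let Q : ℝ → ℝ := fun x => P ((x - k0) / k - j)
    have hQc : ContDiff ℝ 1 Q := by
      simp only [Q, hP]
      unfold segP
      fun_prop
    have hlt : knot k0 k (j : ℤ) < knot k0 k ((j : ℤ) + 1) := by
      rw [ha, hb]; nlinarith
    have hHQ : ∀ x ∈ Set.Icc (knot k0 k (j : ℤ)) (knot k0 k ((j : ℤ) + 1)),
        Hfun D k0 k β x = Q x := by
      rintro x ⟨hx1, hx2⟩
      rw [ha] at hx1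
      rw [hb] at hx2
      have h1 : (j : ℝ) ≤ (x - k0) / k := by rw [le_div_iff₀ hk]; linarith
      have h2 : (x - k0) / k ≤ j + 1 := by rw [div_le_iff₀ hk]; linarith
      have := key ((x - k0) / k - j) (by linarith) (by linarith)
      rw [show k0 + ((j : ℝ) + ((x - k0) / k - j)) * k = x by field_simp; ring] at this
      exact this
    have hint : ∫ x in (knot k0 k (j : ℤ))..(knot k0 k ((j : ℤ) + 1)), deriv (Hfun D k0 k β) x
        = ∫ x in (knot k0 k (j : ℤ))..(knot k0 k ((j : ℤ) + 1)), deriv Q x := by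
      rw [intervalIntegral.integral_of_le hlt.le, intervalIntegral.integral_of_le hlt.le,
        MeasureTheory.integral_Ioc_eq_integral_Ioo, MeasureTheory.integral_Ioc_eq_integral_Ioo]
      refine MeasureTheory.setIntegral_congr_fun measurableSet_Ioo ?_
      intro x hx
      refine Filter.EventuallyEq.deriv_eq ?_
      filter_upwards [Ioo_mem_nhds hx.1 hx.2] with y hy
      exact hHQ y ⟨hy.1.le, hy.2.le⟩
    rw [hint, intervalIntegral.integral_deriv_eq_sub
      (fun x _ => (hQc.differentiable one_ne_zero) x)
      ((hQc.continuous_deriv le_rfl).intervalIntegrable _ _), ← hPR]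
    simp only [Q, ha, hb]
    congr 2 <;> field_simp <;> ring


end
end
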